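/- Let {p_k} be left polynomials over a division ring R, {q_l} right polynomials with q_l of degree exactly l, and I : ℕ → ℕ → R bimoments with ⟨p_k, q_l⟩ = 0 for k ≠ l. Let g(y) = ∑_{j=0}^{m} y^j b_j with all b_j in the center of R. Then the infinite matrix Z with entries Z_{i,j} = ⟨p_i, g · q_j⟩ satisfies Z_{i,j} = 0 whenever i > j + m; that is, Z lies in the band [−m, ∞). -/

import Mathlib

/-!
For fixed `p`, the functional `⟨p, ·⟩` is right `R`-linear. Since `q l` has degree exactly `l` and
an invertible leading coefficient, the right span of `q 0, …, q (n - 1)` contains every polynomial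
of degree less than `n`, so `⟨p i, ·⟩` vanishes on all polynomials of degree less than `i`. The
product `g * q j` has degree at most `m + j < i`.
-/

/-- The pairing of a left polynomial `p(x) = ∑ aᵢ xⁱ` with a right polynomial
`q(y) = ∑ yʲ bⱼ` relative to bimoments `I`: `⟨p, q⟩ = ∑_{i,j} aᵢ · I i j · bⱼ`. -/
noncomputable def bimomentPairing {R : Type*} [DivisionRing R] (I : ℕ → ℕ → R)
    (p q : Polynomial R) : R :=
  ∑ i ∈ p.support, ∑ j ∈ q.support, p.coeff i * I i j * q.coeff j

section RightSpan

open Polynomial MulOpposite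

variable {R : Type*} [Ring R]

theorem degree_sub_op_smul_lt {r q : R[X]} {n : ℕ} {c : R} (hr : r.degree < (n + 1 : ℕ))
    (hq : q.natDegree ≤ n) (hc : q.coeff n * c = r.coeff n) :
    (r - op c • q).degree < n := by
  rw [degree_lt_iff_coeff_zero] at hr ⊢
  intro k hk
  rw [coeff_sub, coeff_smul, op_smul_eq_mul]
  rcases hk.eq_or_lt with rfl | hnk
  · rw [hc, sub_self]
  · rw [hr k hnk, coeff_eq_zero_of_natDegree_lt (hq.trans_lt hnk), zero_mul, sub_zero]

theorem mem_span_mulOpposite_of_degree_lt {q : ℕ → R[X]} {n : ℕ}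
    (hdeg : ∀ l < n, (q l).natDegree ≤ l) (hunit : ∀ l < n, IsUnit ((q l).coeff l))
    {r : R[X]} (hr : r.degree < n) :
    r ∈ Submodule.span Rᵐᵒᵖ (q '' Set.Iio n) := by
  induction n generalizing r with
  | zero =>
    rw [degree_lt_iff_coeff_zero] at hr
    have hr0 : r = 0 := ext fun k => hr k k.zero_le
    exact hr0 ▸ Submodule.zero_mem _
  | succ n ih =>
    obtain ⟨c, hc⟩ : ∃ c, (q n).coeff n * c = r.coeff n :=
      ⟨_, (hunit n n.lt_succ_self).unit.mul_inv_cancel_left _⟩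
    have hlow : r - op c • q n ∈ Submodule.span Rᵐᵒᵖ (q '' Set.Iio n) :=
      ih (fun l hl => hdeg l (hl.trans n.lt_succ_self))
        (fun l hl => hunit l (hl.trans n.lt_succ_self))
        (degree_sub_op_smul_lt hr (hdeg n n.lt_succ_self) hc)
    have hmono : q '' Set.Iio n ⊆ q '' Set.Iio (n + 1) :=
      Set.image_mono (Set.Iio_subset_Iio n.le_succ)
    have hqn : q n ∈ Submodule.span Rᵐᵒᵖ (q '' Set.Iio (n + 1)) :=
      Submodule.subset_span (Set.mem_image_of_mem q n.lt_succ_self)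
    rw [← sub_add_cancel r (op c • q n)]
    exact add_mem (Submodule.span_mono hmono hlow) (Submodule.smul_mem _ _ hqn)

theorem linearMap_apply_eq_zero_of_degree_lt {M : Type*} [AddCommMonoid M] [Module Rᵐᵒᵖ M]
    (f : R[X] →ₗ[Rᵐᵒᵖ] M) {q : ℕ → R[X]} {n : ℕ}
    (hdeg : ∀ l < n, (q l).natDegree ≤ l) (hunit : ∀ l < n, IsUnit ((q l).coeff l))
    (hf : ∀ l < n, f (q l) = 0) {r : R[X]} (hr : r.degree < n) :
    f r = 0 := by
  have hspan : Submodule.span Rᵐᵒᵖ (q '' Set.Iio n) ≤ LinearMap.ker f :=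
    Submodule.span_le.mpr (Set.image_subset_iff.mpr hf)
  exact hspan (mem_span_mulOpposite_of_degree_lt hdeg hunit hr)

end RightSpan

section Pairing

open Polynomial

/-- The functional `⟨p, ·⟩` determined by the bimoments `I`, as a right `R`-linear map; the right
action of `R` on `R[X]` is encoded as the left action of `Rᵐᵒᵖ`. -/
noncomputable def bimomentFunctional {R : Type*} [Semiring R] (I : ℕ → ℕ → R) (p : R[X]) :
    R[X] →ₗ[Rᵐᵒᵖ] R :=
  ∑ i ∈ p.support, lsum fun j => LinearMap.mulLeft Rᵐᵒᵖ (p.coeff i * I i j)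

variable {R : Type*} [DivisionRing R] (I : ℕ → ℕ → R)

theorem bimomentFunctional_apply (p r : R[X]) :
    bimomentFunctional I p r = bimomentPairing I p r := by
  simp only [bimomentFunctional, bimomentPairing, LinearMap.sum_apply, lsum_apply, sum_def,
    LinearMap.mulLeft_apply]

theorem pairing_mulLeft_banded_general (p q : ℕ → R[X])
    (hq : ∀ l, (q l).coeff l ≠ 0 ∧ ∀ j, l < j → (q l).coeff j = 0)
    (horth : ∀ k l, l < k → bimomentPairing I (p k) (q l) = 0)
    (m : ℕ) (g : R[X]) (hgm : ∀ j, m < j → g.coeff j = 0) (i j : ℕ) (hij : j + m < i) :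
    bimomentPairing I (p i) (g * q j) = 0 := by
  have hdeg (l : ℕ) : (q l).natDegree ≤ l := natDegree_le_iff_coeff_eq_zero.mpr (hq l).2
  have hprod : (g * q j).natDegree ≤ m + j :=
    natDegree_mul_le_of_le (natDegree_le_iff_coeff_eq_zero.mpr hgm) (hdeg j)
  have hlt : (g * q j).degree < i :=
    degree_le_natDegree.trans_lt (Nat.cast_lt.mpr (by lia))
  simp only [← bimomentFunctional_apply] at horth ⊢
  exact linearMap_apply_eq_zero_of_degree_lt _ (fun l _ => hdeg l) (fun l _ => (hq l).1.isUnit)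
    (horth i) hlt

end Pairing

/-- if `q l` has degree exactly `l`, `⟨p k, q l⟩ = 0` for `k ≠ l`, and
`g(y) = ∑_{j=0}^m yʲ bⱼ` has central coefficients, then the matrix
`Z i j = ⟨p i, g · q j⟩` vanishes whenever `i > j + m`, i.e. `Z` lies in the band `[-m, ∞)`. -/
theorem pairing_mulLeft_banded {R : Type*} [DivisionRing R] (I : ℕ → ℕ → R)
    (p q : ℕ → Polynomial R)
    (hq : ∀ l, (q l).coeff l ≠ 0 ∧ ∀ j, l < j → (q l).coeff j = 0)
    (horth : ∀ k l, k ≠ l → bimomentPairing I (p k) (q l) = 0)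
    (m : ℕ) (g : Polynomial R)
    (hgC : ∀ j, g.coeff j ∈ Set.center R) (hgm : ∀ j, m < j → g.coeff j = 0) :
    ∀ i j : ℕ, j + m < i → bimomentPairing I (p i) (g * q j) = 0 :=
  pairing_mulLeft_banded_general I p q hq (fun k l hlk => horth k l hlk.ne') m g hgm
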